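/- For every 1-Lipschitz function f : ℤ₊ → ℝ and every i ≥ 1, the first difference of the Stein solution satisfies |Δg_f(i)| ≤ max{i, √α + 1} · min( 1/α, 1/(βi + i(i−1)) ). -/

import Mathlib

/-!
Consider a birth-death chain with birth rates `b` and death rates `d`, and fix a state `i`. Let `F`
and `T` be the `π`-masses strictly below and strictly above `i`, and let `L` and `R` be the sums of
`(h k - h i) π k` over `k < i` and over `k > i`. Solving the Stein equation gives
`d i π i g(i) = (π i + T) L - F R` and `b i π i g(i+1) = T L - (F + π i) R`, so that
`d i b i π i Δg(i) = -L (b i (π i + T) - d i T) - R (d i (F + π i) - b i F)`.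
By detailed balance both brackets are nonnegative when `b` decreases and `d` increases. Hence
`|L| ≤ M F` and `|R| ≤ M T` imply `|Δg(i)| ≤ M (F / d i + T / b i) ≤ M min (1 / b i, 1 / d i)`.

For a 1-Lipschitz `h` the bound `|L| ≤ i F` is immediate. If moreover `n² ≤ d (n + 1)`, then
detailed balance makes `π` decay fast enough above `i` for `|R| ≤ (√(b 0) + 1) T`.
-/

open Finset

section Sums

variable {u q : ℕ → ℝ} {s : ℝ}

/-- The sum of `u` over the states strictly below `i`. -/
def leftSum (u : ℕ → ℝ) (i : ℕ) : ℝ := ∑ k ∈ range i, u k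

/-- The sum of `u` over the states strictly above `i`; it is `0` if `u` is not summable. -/
noncomputable def rightSum (u : ℕ → ℝ) (i : ℕ) : ℝ := ∑' k, u (k + (i + 1))

theorem leftSum_succ (u : ℕ → ℝ) (i : ℕ) : leftSum u (i + 1) = leftSum u i + u i :=
  sum_range_succ u i

theorem leftSum_add_apply_add_rightSum (hu : Summable u) (i : ℕ) :
    leftSum u i + u i + rightSum u i = ∑' k, u k := by
  rw [← leftSum_succ]
  exact hu.sum_add_tsum_nat_add (i + 1)

theorem apply_add_rightSum (hu : Summable u) (i : ℕ) :
    u i + rightSum u i = ∑' k, u (k + i) := by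
  have htail : Summable fun k => u (k + i) := (summable_nat_add_iff i).2 hu
  rw [htail.tsum_eq_zero_add, zero_add]
  simp only [rightSum, add_assoc, add_comm 1 i]

theorem leftSum_nonneg (hu : ∀ k, 0 ≤ u k) (i : ℕ) : 0 ≤ leftSum u i :=
  sum_nonneg fun k _ => hu k

theorem rightSum_nonneg (hu : ∀ k, 0 ≤ u k) (i : ℕ) : 0 ≤ rightSum u i :=
  tsum_nonneg fun _ => hu _

theorem succ_mul_le_of_sq_mul_le (hs : 0 < s) (hq : ∀ k, 0 ≤ q k)
    (hdecay : ∀ k : ℕ, ((k : ℝ) + 1) ^ 2 * q (k + 1) ≤ s ^ 2 * q k) (k : ℕ) :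
    ((k : ℝ) + 1) * q (k + 1) ≤ s / 2 * (q k + q (k + 1)) := by
  have am_gm : 2 * s * ((k : ℝ) + 1) * q (k + 1) ≤ (((k : ℝ) + 1) ^ 2 + s ^ 2) * q (k + 1) :=
    mul_le_mul_of_nonneg_right (by linarith [two_mul_le_add_sq s ((k : ℝ) + 1)]) (hq _)
  refine le_of_mul_le_mul_left ?_ (by positivity : 0 < 2 * s)
  linarith [hdecay k]

theorem summable_nat_mul_of_sq_mul_le (hs : 0 < s) (hq : ∀ k, 0 ≤ q k) (hsum : Summable q)
    (hdecay : ∀ k : ℕ, ((k : ℝ) + 1) ^ 2 * q (k + 1) ≤ s ^ 2 * q k) :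
    Summable fun k : ℕ => (k : ℝ) * q k := by
  rw [← summable_nat_add_iff 1]
  push_cast
  exact .of_nonneg_of_le (fun k => mul_nonneg (by positivity) (hq _))
    (succ_mul_le_of_sq_mul_le hs hq hdecay)
    ((hsum.add ((summable_nat_add_iff 1).2 hsum)).mul_left _)

theorem tsum_nat_mul_le_of_sq_mul_le (hs : 0 < s) (hq : ∀ k, 0 ≤ q k) (hsum : Summable q)
    (hdecay : ∀ k : ℕ, ((k : ℝ) + 1) ^ 2 * q (k + 1) ≤ s ^ 2 * q k) :
    ∑' k : ℕ, (k : ℝ) * q k ≤ s * ∑' k, q k := by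
  have hmoment := summable_nat_mul_of_sq_mul_le hs hq hsum hdecay
  have hsum' : Summable fun k => q (k + 1) := (summable_nat_add_iff 1).2 hsum
  have hshift : ∑' k, q (k + 1) ≤ ∑' k, q k := by
    rw [hsum.tsum_eq_zero_add]
    exact le_add_of_nonneg_left (hq 0)
  calc ∑' k : ℕ, (k : ℝ) * q k
      = ∑' k : ℕ, ((k : ℝ) + 1) * q (k + 1) := by
        rw [hmoment.tsum_eq_zero_add]
        push_cast
        ring
    _ ≤ ∑' k, s / 2 * (q k + q (k + 1)) := by
        refine Summable.tsum_le_tsum (succ_mul_le_of_sq_mul_le hs hq hdecay) ?_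
          ((hsum.add hsum').mul_left _)
        exact_mod_cast (summable_nat_add_iff 1).2 hmoment
    _ = s / 2 * (∑' k, q k + ∑' k, q (k + 1)) := by
        rw [tsum_mul_left, hsum.tsum_add hsum']
    _ ≤ s / 2 * (∑' k, q k + ∑' k, q k) := by gcongr
    _ = s * ∑' k, q k := by ring

end Sums

/-- `π` is the stationary distribution of the birth-death chain on `ℕ` with birth rates `b` and
death rates `d`; stationarity is expressed by detailed balance. -/
structure IsBirthDeathLaw (b d π : ℕ → ℝ) : Prop where
  birth_pos : ∀ n, 0 < b n
  death_zero : d 0 = 0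
  pos : ∀ n, 0 < π n
  hasSum : HasSum π 1
  detailed_balance : ∀ n, d (n + 1) * π (n + 1) = b n * π n

/-- `g` solves the Stein equation of the birth-death law `π` for the test function `h`. -/
def IsSteinSolution (b d π h g : ℕ → ℝ) : Prop :=
  ∀ n, b n * g (n + 1) - d n * g n = h n - ∑' k, h k * π k

/-- The `π`-weighted increments of `h` from the state `i`, whose sums below and above `i` are the
quantities `L` and `R` controlling the Stein solution. -/
def weightedIncrement (π h : ℕ → ℝ) (i k : ℕ) : ℝ := (h k - h i) * π k

namespace IsBirthDeathLaw

variable {b d π h g : ℕ → ℝ} {i : ℕ}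

theorem of_eq_prod_div_prod {C : ℝ} (hb : ∀ n, 0 < b n) (hd₀ : d 0 = 0) (hd : ∀ n, 0 < d (n + 1))
    (hC : 0 < C) (hπ : ∀ n, π n = C * (∏ k ∈ range n, b k) / ∏ k ∈ range n, d (k + 1))
    (hsum : ∑' n, π n = 1) : IsBirthDeathLaw b d π where
  birth_pos := hb
  death_zero := hd₀
  pos n := by
    rw [hπ]
    exact div_pos (mul_pos hC (prod_pos fun k _ => hb k)) (prod_pos fun k _ => hd k)
  hasSum := by
    have hπ_summable : Summable π := by
      by_contra hns
      simp [tsum_eq_zero_of_not_summable hns] at hsum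
    exact hsum ▸ hπ_summable.hasSum
  detailed_balance n := by
    have hprod : ∏ k ∈ range n, d (k + 1) ≠ 0 := prod_ne_zero_iff.2 fun k _ => (hd k).ne'
    have hdn := (hd n).ne'
    rw [hπ, hπ, prod_range_succ, prod_range_succ]
    field_simp

theorem death_pos (hπ : IsBirthDeathLaw b d π) (hi : 1 ≤ i) : 0 < d i := by
  obtain ⟨j, rfl⟩ := Nat.exists_eq_add_of_le' hi
  refine pos_of_mul_pos_left ?_ (hπ.pos (j + 1)).le
  rw [hπ.detailed_balance]
  exact mul_pos (hπ.birth_pos j) (hπ.pos j)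

theorem leftSum_add_apply_add_rightSum_eq_one (hπ : IsBirthDeathLaw b d π) (i : ℕ) :
    leftSum π i + π i + rightSum π i = 1 := by
  rw [leftSum_add_apply_add_rightSum hπ.hasSum.summable, hπ.hasSum.tsum_eq]

section MonotoneRates

theorem birth_mul_leftSum_le (hπ : IsBirthDeathLaw b d π) (hb : Antitone b) (hd : Monotone d)
    (i : ℕ) : b i * leftSum π i ≤ d i * (leftSum π i + π i) := by
  have hdi : 0 ≤ d i := hπ.death_zero ▸ hd (Nat.zero_le i)
  have hstep : ∀ k ∈ range i, b i * π k ≤ d i * π (k + 1) := fun k hk => by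
    have hki : k < i := mem_range.1 hk
    calc b i * π k ≤ b k * π k := mul_le_mul_of_nonneg_right (hb hki.le) (hπ.pos k).le
      _ = d (k + 1) * π (k + 1) := (hπ.detailed_balance k).symm
      _ ≤ d i * π (k + 1) := mul_le_mul_of_nonneg_right (hd hki) (hπ.pos _).le
  calc b i * leftSum π i ≤ d i * ∑ k ∈ range i, π (k + 1) := by
        rw [leftSum, mul_sum, mul_sum]
        exact sum_le_sum hstep
    _ ≤ d i * (∑ k ∈ range i, π (k + 1) + π 0) :=
        mul_le_mul_of_nonneg_left (le_add_of_nonneg_right (hπ.pos 0).le) hdi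
    _ = d i * (leftSum π i + π i) := by rw [← sum_range_succ', ← leftSum_succ, leftSum]

theorem death_mul_rightSum_le (hπ : IsBirthDeathLaw b d π) (hb : Antitone b) (hd : Monotone d)
    (i : ℕ) : d i * rightSum π i ≤ b i * (π i + rightSum π i) := by
  have hsum := hπ.hasSum.summable
  have hstep : ∀ k, d i * π (k + (i + 1)) ≤ b i * π (k + i) := fun k => by
    calc d i * π (k + (i + 1))
        ≤ d (k + i + 1) * π (k + i + 1) :=
          mul_le_mul_of_nonneg_right (hd (by lia)) (hπ.pos _).le
      _ = b (k + i) * π (k + i) := hπ.detailed_balance _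
      _ ≤ b i * π (k + i) := mul_le_mul_of_nonneg_right (hb (by lia)) (hπ.pos _).le
  rw [apply_add_rightSum hsum, rightSum, ← tsum_mul_left, ← tsum_mul_left]
  exact Summable.tsum_le_tsum hstep (((summable_nat_add_iff (i + 1)).2 hsum).mul_left _)
    (((summable_nat_add_iff i).2 hsum).mul_left _)

theorem leftSum_div_add_rightSum_div_le_min (hπ : IsBirthDeathLaw b d π) (hb : Antitone b)
    (hd : Monotone d) (hi : 1 ≤ i) :
    leftSum π i / d i + rightSum π i / b i ≤ min (1 / b i) (1 / d i) := by
  have hbi := hπ.birth_pos i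
  have hdi := hπ.death_pos hi
  have htotal := hπ.leftSum_add_apply_add_rightSum_eq_one i
  have hleft : leftSum π i / d i ≤ (leftSum π i + π i) / b i := by
    rw [div_le_div_iff₀ hdi hbi]
    linarith [hπ.birth_mul_leftSum_le hb hd i]
  have hright : rightSum π i / b i ≤ (π i + rightSum π i) / d i := by
    rw [div_le_div_iff₀ hbi hdi]
    linarith [hπ.death_mul_rightSum_le hb hd i]
  refine le_min ?_ ?_
  · rw [← htotal, add_div _ (rightSum π i)]
    gcongr
  · rw [← htotal, add_assoc, add_div (leftSum π i)]
    gcongr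

end MonotoneRates

section SteinSolution

theorem tsum_mul_eq_add_leftSum_add_rightSum (hπ : IsBirthDeathLaw b d π)
    (hh : Summable (weightedIncrement π h i)) :
    ∑' k, h k * π k = h i + leftSum (weightedIncrement π h i) i +
      rightSum (weightedIncrement π h i) i := by
  have hsplit : ∀ k, h k * π k = h i * π k + weightedIncrement π h i k := fun k => by
    rw [weightedIncrement]; ring
  have hzero : weightedIncrement π h i i = 0 := by simp [weightedIncrement]
  rw [tsum_congr hsplit, (hπ.hasSum.summable.mul_left _).tsum_add hh, tsum_mul_left,
    hπ.hasSum.tsum_eq, ← leftSum_add_apply_add_rightSum hh i, hzero]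
  ring

theorem death_mul_solution_eq_leftSum (hπ : IsBirthDeathLaw b d π)
    (hg : IsSteinSolution b d π h g) (n : ℕ) :
    d n * π n * g n = leftSum (fun k => (h k - ∑' l, h l * π l) * π k) n := by
  induction n with
  | zero => simp [leftSum, hπ.death_zero]
  | succ n ih =>
    rw [leftSum_succ, ← ih, hπ.detailed_balance]
    linear_combination π n * hg n

theorem death_mul_solution (hπ : IsBirthDeathLaw b d π) (hg : IsSteinSolution b d π h g)
    (hh : Summable (weightedIncrement π h i)) :
    d i * π i * g i = (π i + rightSum π i) * leftSum (weightedIncrement π h i) i -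
      leftSum π i * rightSum (weightedIncrement π h i) i := by
  have hrecentre : leftSum (fun k => (h k - ∑' l, h l * π l) * π k) i =
      leftSum (weightedIncrement π h i) i + (h i - ∑' l, h l * π l) * leftSum π i := by
    simp only [leftSum, weightedIncrement, mul_sum, ← sum_add_distrib]
    exact sum_congr rfl fun k _ => by ring
  rw [hπ.death_mul_solution_eq_leftSum hg, hrecentre, hπ.tsum_mul_eq_add_leftSum_add_rightSum hh]
  linear_combination
    -leftSum (weightedIncrement π h i) i * hπ.leftSum_add_apply_add_rightSum_eq_one i

theorem birth_mul_solution_succ (hπ : IsBirthDeathLaw b d π) (hg : IsSteinSolution b d π h g)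
    (hh : Summable (weightedIncrement π h i)) :
    b i * π i * g (i + 1) = rightSum π i * leftSum (weightedIncrement π h i) i -
      (leftSum π i + π i) * rightSum (weightedIncrement π h i) i := by
  have hmean := hπ.tsum_mul_eq_add_leftSum_add_rightSum hh
  linear_combination π i * hg i + hπ.death_mul_solution hg hh - π i * hmean

theorem rates_mul_solution_sub (hπ : IsBirthDeathLaw b d π) (hg : IsSteinSolution b d π h g)
    (hh : Summable (weightedIncrement π h i)) :
    d i * b i * π i * (g (i + 1) - g i) =
      -(leftSum (weightedIncrement π h i) i *
          (b i * (π i + rightSum π i) - d i * rightSum π i)) -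
        rightSum (weightedIncrement π h i) i *
          (d i * (leftSum π i + π i) - b i * leftSum π i) := by
  linear_combination d i * hπ.birth_mul_solution_succ hg hh - b i * hπ.death_mul_solution hg hh

theorem abs_solution_sub_le {M : ℝ} (hπ : IsBirthDeathLaw b d π) (hb : Antitone b)
    (hd : Monotone d) (hg : IsSteinSolution b d π h g) (hi : 1 ≤ i)
    (hh : Summable (weightedIncrement π h i))
    (hleft : |leftSum (weightedIncrement π h i) i| ≤ M * leftSum π i)
    (hright : |rightSum (weightedIncrement π h i) i| ≤ M * rightSum π i) :
    |g (i + 1) - g i| ≤ M * (leftSum π i / d i + rightSum π i / b i) := by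
  have hbi := hπ.birth_pos i
  have hdi := hπ.death_pos hi
  have hpi := hπ.pos i
  have hA : 0 ≤ b i * (π i + rightSum π i) - d i * rightSum π i :=
    sub_nonneg.2 (hπ.death_mul_rightSum_le hb hd i)
  have hB : 0 ≤ d i * (leftSum π i + π i) - b i * leftSum π i :=
    sub_nonneg.2 (hπ.birth_mul_leftSum_le hb hd i)
  have hrates : 0 < d i * b i * π i := by positivity
  refine le_of_mul_le_mul_left ?_ hrates
  calc d i * b i * π i * |g (i + 1) - g i|
      = |d i * b i * π i * (g (i + 1) - g i)| := by rw [abs_mul, abs_of_pos hrates]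
    _ ≤ |leftSum (weightedIncrement π h i) i| *
            (b i * (π i + rightSum π i) - d i * rightSum π i) +
          |rightSum (weightedIncrement π h i) i| *
            (d i * (leftSum π i + π i) - b i * leftSum π i) := by
        rw [hπ.rates_mul_solution_sub hg hh]
        refine (abs_sub _ _).trans_eq ?_
        rw [abs_neg, abs_mul, abs_mul, abs_of_nonneg hA, abs_of_nonneg hB]
    _ ≤ M * leftSum π i * (b i * (π i + rightSum π i) - d i * rightSum π i) +
          M * rightSum π i * (d i * (leftSum π i + π i) - b i * leftSum π i) := by gcongr
    _ = d i * b i * π i * (M * (leftSum π i / d i + rightSum π i / b i)) := by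
        field_simp
        ring

end SteinSolution

section Lipschitz

theorem abs_weightedIncrement_le (hπ : IsBirthDeathLaw b d π)
    (hh : ∀ x y : ℕ, |h x - h y| ≤ |(x : ℝ) - (y : ℝ)|) (i k : ℕ) :
    |weightedIncrement π h i k| ≤ |(k : ℝ) - (i : ℝ)| * π k := by
  rw [weightedIncrement, abs_mul, abs_of_pos (hπ.pos k)]
  exact mul_le_mul_of_nonneg_right (hh k i) (hπ.pos k).le

theorem abs_weightedIncrement_add_succ_le (hπ : IsBirthDeathLaw b d π)
    (hh : ∀ x y : ℕ, |h x - h y| ≤ |(x : ℝ) - (y : ℝ)|) (i k : ℕ) :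
    |weightedIncrement π h i (k + (i + 1))| ≤ k * π (k + (i + 1)) + π (k + (i + 1)) := by
  have hdist : |((k + (i + 1) : ℕ) : ℝ) - (i : ℝ)| = k + 1 := by
    push_cast
    rw [abs_of_nonneg] <;> linarith [(Nat.cast_nonneg k : (0 : ℝ) ≤ k)]
  calc _ ≤ |((k + (i + 1) : ℕ) : ℝ) - (i : ℝ)| * π (k + (i + 1)) :=
        hπ.abs_weightedIncrement_le hh i _
    _ = k * π (k + (i + 1)) + π (k + (i + 1)) := by rw [hdist]; ring

theorem abs_leftSum_weightedIncrement_le (hπ : IsBirthDeathLaw b d π)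
    (hh : ∀ x y : ℕ, |h x - h y| ≤ |(x : ℝ) - (y : ℝ)|) (i : ℕ) :
    |leftSum (weightedIncrement π h i) i| ≤ i * leftSum π i := by
  rw [leftSum, leftSum, mul_sum]
  refine (abs_sum_le_sum_abs _ _).trans (sum_le_sum fun k hk => ?_)
  have hki : (k : ℝ) ≤ i := by exact_mod_cast (mem_range.1 hk).le
  refine (hπ.abs_weightedIncrement_le hh i k).trans
    (mul_le_mul_of_nonneg_right ?_ (hπ.pos k).le)
  rw [abs_sub_comm, abs_of_nonneg (sub_nonneg.2 hki)]
  exact sub_le_self _ k.cast_nonneg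

theorem sq_mul_apply_le (hπ : IsBirthDeathLaw b d π) (hb : Antitone b)
    (hd_sq : ∀ n : ℕ, (n : ℝ) ^ 2 ≤ d (n + 1)) (i k : ℕ) :
    ((k : ℝ) + 1) ^ 2 * π (k + 1 + (i + 1)) ≤ √(b 0) ^ 2 * π (k + (i + 1)) := by
  have hsucc : k + 1 + (i + 1) = k + (i + 1) + 1 := by lia
  rw [Real.sq_sqrt (hπ.birth_pos 0).le, hsucc]
  have hrate : ((k : ℝ) + 1) ^ 2 ≤ d (k + (i + 1) + 1) := by
    refine le_trans ?_ (hd_sq (k + (i + 1)))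
    push_cast
    gcongr
    exact le_add_of_nonneg_left i.cast_nonneg
  calc ((k : ℝ) + 1) ^ 2 * π (k + (i + 1) + 1)
      ≤ d (k + (i + 1) + 1) * π (k + (i + 1) + 1) :=
        mul_le_mul_of_nonneg_right hrate (hπ.pos _).le
    _ = b (k + (i + 1)) * π (k + (i + 1)) := hπ.detailed_balance _
    _ ≤ b 0 * π (k + (i + 1)) := mul_le_mul_of_nonneg_right (hb (Nat.zero_le _)) (hπ.pos _).le

theorem summable_nat_mul_apply_add (hπ : IsBirthDeathLaw b d π) (hb : Antitone b)
    (hd_sq : ∀ n : ℕ, (n : ℝ) ^ 2 ≤ d (n + 1)) (i : ℕ) :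
    Summable fun k : ℕ => (k : ℝ) * π (k + (i + 1)) :=
  summable_nat_mul_of_sq_mul_le (q := fun k => π (k + (i + 1)))
    (Real.sqrt_pos.2 (hπ.birth_pos 0)) (fun _ => (hπ.pos _).le)
    ((summable_nat_add_iff (i + 1)).2 hπ.hasSum.summable) (hπ.sq_mul_apply_le hb hd_sq i)

theorem summable_weightedIncrement (hπ : IsBirthDeathLaw b d π) (hb : Antitone b)
    (hd_sq : ∀ n : ℕ, (n : ℝ) ^ 2 ≤ d (n + 1))
    (hh : ∀ x y : ℕ, |h x - h y| ≤ |(x : ℝ) - (y : ℝ)|) (i : ℕ) :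
    Summable (weightedIncrement π h i) := by
  rw [← summable_nat_add_iff (i + 1)]
  exact .of_norm_bounded ((hπ.summable_nat_mul_apply_add hb hd_sq i).add
    ((summable_nat_add_iff (i + 1)).2 hπ.hasSum.summable))
    (hπ.abs_weightedIncrement_add_succ_le hh i)

theorem abs_rightSum_weightedIncrement_le (hπ : IsBirthDeathLaw b d π) (hb : Antitone b)
    (hd_sq : ∀ n : ℕ, (n : ℝ) ^ 2 ≤ d (n + 1))
    (hh : ∀ x y : ℕ, |h x - h y| ≤ |(x : ℝ) - (y : ℝ)|) (i : ℕ) :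
    |rightSum (weightedIncrement π h i) i| ≤ (√(b 0) + 1) * rightSum π i := by
  have htail : Summable fun k => π (k + (i + 1)) :=
    (summable_nat_add_iff (i + 1)).2 hπ.hasSum.summable
  have hmoment := hπ.summable_nat_mul_apply_add hb hd_sq i
  calc |rightSum (weightedIncrement π h i) i|
      ≤ ∑' k : ℕ, ((k : ℝ) * π (k + (i + 1)) + π (k + (i + 1))) :=
        tsum_of_norm_bounded (f := fun k => weightedIncrement π h i (k + (i + 1)))
          (hmoment.add htail).hasSum (hπ.abs_weightedIncrement_add_succ_le hh i)
    _ = ∑' k : ℕ, (k : ℝ) * π (k + (i + 1)) + rightSum π i := hmoment.tsum_add htail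
    _ ≤ √(b 0) * rightSum π i + rightSum π i :=
        add_le_add_left (tsum_nat_mul_le_of_sq_mul_le (Real.sqrt_pos.2 (hπ.birth_pos 0))
          (fun _ => (hπ.pos _).le) htail (hπ.sq_mul_apply_le hb hd_sq i)) _
    _ = (√(b 0) + 1) * rightSum π i := by ring

end Lipschitz

end IsBirthDeathLaw

theorem stmt_19_general {b d π h g : ℕ → ℝ} {i : ℕ} (hπ : IsBirthDeathLaw b d π)
    (hb : Antitone b) (hd : Monotone d) (hd_sq : ∀ n : ℕ, (n : ℝ) ^ 2 ≤ d (n + 1))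
    (hh : ∀ x y : ℕ, |h x - h y| ≤ |(x : ℝ) - (y : ℝ)|) (hg : IsSteinSolution b d π h g)
    (hi : 1 ≤ i) :
    |g (i + 1) - g i| ≤ max (i : ℝ) (√(b 0) + 1) * min (1 / b i) (1 / d i) := by
  have hπ_nonneg : ∀ k, 0 ≤ π k := fun k => (hπ.pos k).le
  have hleft : |leftSum (weightedIncrement π h i) i| ≤ max (i : ℝ) (√(b 0) + 1) * leftSum π i :=
    (hπ.abs_leftSum_weightedIncrement_le hh i).trans
      (mul_le_mul_of_nonneg_right (le_max_left _ _) (leftSum_nonneg hπ_nonneg i))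
  have hright :
      |rightSum (weightedIncrement π h i) i| ≤ max (i : ℝ) (√(b 0) + 1) * rightSum π i :=
    (hπ.abs_rightSum_weightedIncrement_le hb hd_sq hh i).trans
      (mul_le_mul_of_nonneg_right (le_max_right _ _) (rightSum_nonneg hπ_nonneg i))
  have hsummable := hπ.summable_weightedIncrement hb hd_sq hh i
  exact (hπ.abs_solution_sub_le hb hd hg hi hsummable hleft hright).trans
    (mul_le_mul_of_nonneg_left (hπ.leftSum_div_add_rightSum_div_le_min hb hd hi) (by positivity))

section PolynomialBirthDeath

variable {α β : ℝ}

/-- The death rates of the polynomial birth-death law `PBD(α; 0, β, 1)`, whose birth rates are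
constantly `α`. -/
def pbdDeathRate (β : ℝ) (n : ℕ) : ℝ := β * (n : ℝ) + (n : ℝ) * ((n : ℝ) - 1)

theorem pbdDeathRate_succ (β : ℝ) (n : ℕ) :
    pbdDeathRate β (n + 1) = β * ((n : ℝ) + 1) + ((n : ℝ) + 1) * (n : ℝ) := by
  simp [pbdDeathRate]

theorem monotone_pbdDeathRate (hβ : 0 ≤ β) : Monotone (pbdDeathRate β) :=
  monotone_nat_of_le_succ fun n => by
    rw [pbdDeathRate_succ, pbdDeathRate]
    linarith [(Nat.cast_nonneg n : (0 : ℝ) ≤ n)]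

theorem sq_le_pbdDeathRate_succ (hβ : 0 ≤ β) (n : ℕ) : (n : ℝ) ^ 2 ≤ pbdDeathRate β (n + 1) := by
  have hlinear : 0 ≤ β * ((n : ℝ) + 1) := by positivity
  rw [pbdDeathRate_succ]
  linarith [(Nat.cast_nonneg n : (0 : ℝ) ≤ n)]

theorem isBirthDeathLaw_pbd {C : ℝ} {π : ℕ → ℝ} (hα : 0 < α) (hβ : 0 < β) (hC : 0 < C)
    (hπ : ∀ n : ℕ, π n =
      C * α ^ n / ∏ i ∈ range n, (β * ((i : ℝ) + 1) + ((i : ℝ) + 1) * (i : ℝ)))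
    (hsum : ∑' n, π n = 1) : IsBirthDeathLaw (fun _ => α) (pbdDeathRate β) π := by
  refine .of_eq_prod_div_prod (fun _ => hα) (by simp [pbdDeathRate]) (fun n => ?_) hC
    (fun n => ?_) hsum
  · rw [pbdDeathRate_succ]
    positivity
  · simp only [hπ n, prod_const, card_range, pbdDeathRate_succ]

end PolynomialBirthDeath

/-- bound on `|Δg_f i|` for `i ≥ 1` in terms of `max{i, √α + 1}` and the death/birth rates. -/
theorem stmt_19
    (α β : ℝ) (hα : 0 < α) (hβ : 0 < β)
    (C : ℝ) (hC : 0 < C) (π : ℕ → ℝ)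
    (hπ : ∀ n : ℕ, π n =
      C * α ^ n / ∏ i ∈ Finset.range n, (β * ((i : ℝ) + 1) + ((i : ℝ) + 1) * (i : ℝ)))
    (hπ1 : ∑' n, π n = 1)
    (f : ℕ → ℝ) (hf : ∀ x y : ℕ, |f x - f y| ≤ |(x : ℝ) - (y : ℝ)|)
    (hfs : Summable fun n => |f n| * π n)
    (g : ℕ → ℝ) (hg0 : g 0 = g 1)
    (hg : ∀ n : ℕ, α * g (n + 1) - (β * (n : ℝ) + (n : ℝ) * ((n : ℝ) - 1)) * g n
      = f n - ∑' k, f k * π k)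
    :
    ∀ i : ℕ, 1 ≤ i → |g (i + 1) - g i| ≤
      max (i : ℝ) (Real.sqrt α + 1) *
        min (1 / α) (1 / (β * (i : ℝ) + (i : ℝ) * ((i : ℝ) - 1))) := by
  intro i hi
  exact stmt_19_general (isBirthDeathLaw_pbd hα hβ hC hπ hπ1) antitone_const
    (monotone_pbdDeathRate hβ.le) (sq_le_pbdDeathRate_succ hβ.le) hf hg hi
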